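/- arXiv:0705.1562 — 2 statements merged into one kernel-verified Lean document; each statement's English description precedes it below -/
import Mathlib

section
/- Let G be a strongly connected finite directed graph without loops with sink s, and let x be any vertex. If T_1, T_2 ∈ Rec(G) and e_x(T_1) = e_x(T_2), then T_1 = T_2. In other words, the operation e_x of starting a chip at x and routing it to the sink acts injectively on the set Rec(G) of oriented-spanning-tree rotor configurations. -/
/-- A finite directed multigraph without loops, together with a distinguished
sink vertex and, for each vertex `x`, a cyclic ordering of the edges emanating
from `x`: the outgoing edges at `x` are indexed by `ZMod (deg x)` (in cyclic
order), and `head x e` is the target of the edge `e`. -/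
structure RotorGraph (V : Type*) [Fintype V] [DecidableEq V] where
  sink : V
  deg : V → ℕ
  deg_pos : ∀ x, 0 < deg x
  head : ∀ x : V, ZMod (deg x) → V
  no_loops : ∀ x e, head x e ≠ x

namespace RotorGraph

variable {V : Type*} [Fintype V] [DecidableEq V] (G : RotorGraph V)

/-- `x` is adjacent to `y` if some edge goes from `x` to `y`. -/
def Adj (x y : V) : Prop := ∃ e, G.head x e = y

/-- `G` is strongly connected: every vertex has a directed path to every vertex. -/
def StronglyConnected : Prop := ∀ x y : V, Relation.ReflTransGen G.Adj x y

/-- A rotor configuration: each vertex carries a rotor pointing along one of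
its outgoing edges.  (The value at the sink is irrelevant: it is never read
nor modified by the rotor-router walk.) -/
abbrev Conf := ∀ x : V, ZMod (G.deg x)

/-- One step of rotor-router walk for the state (rotor configuration, chip
location): if the chip is not at the sink, first increment the rotor at the
chip's location to the next edge in the cyclic ordering, then move the chip
along this new edge.  States whose chip is at the sink are absorbing. -/
def step (p : G.Conf × V) : G.Conf × V :=
  if p.2 = G.sink then p
  else (Function.update p.1 p.2 (p.1 p.2 + 1), G.head p.2 (p.1 p.2 + 1))

/-- The target of the rotor at `x`. -/
def next (T : G.Conf) (x : V) : V := G.head x (T x)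

/-- The rotors of `T` contain an oriented cycle all of whose vertices lie in `A`. -/
def HasCycleIn (T : G.Conf) (A : Set V) : Prop :=
  ∃ (m : ℕ) (x : V), 0 < m ∧ (∀ i < m, (G.next T)^[i] x ∈ A) ∧ (G.next T)^[m] x = x

/-- `T ∈ Rec(G)`: the rotors at the non-sink vertices form no oriented cycle,
i.e. they form an oriented spanning tree rooted at the sink. -/
def Rec (T : G.Conf) : Prop := ¬ G.HasCycleIn T {y | y ≠ G.sink}

/-- `e_x(T)`: start a chip at `x` and let it perform rotor-router walk until
it first reaches the sink; `chip x T` is the resulting rotor configuration. -/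
noncomputable def chip (x : V) (T : G.Conf) : G.Conf :=
  haveI := Classical.dec (∃ n, (G.step^[n] (T, x)).2 = G.sink)
  if h : ∃ n, (G.step^[n] (T, x)).2 = G.sink then (G.step^[Nat.find h] (T, x)).1 else T

end RotorGraph

/-!
Close up the graph by an edge from the sink to `x`: a chip at the sink is returned to `x`. The
closed walk preserves the pairs (rotors, chip) in which all rotors lead to the chip, the
unicycles. It is injective on them: after a step from `w` to `v`, the rotors form a unicycle with
cycle through `w` and `v`, so `w` is recovered as the predecessor of `v` on the cycle, and turning
back the rotor at `w` undoes the step. Configurations in `Rec(G)` are unicycles with the chip at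
the sink, and `e_x` is the first-return map of the closed walk to the states with chip at the sink.
First-return maps of injective maps are injective.
-/

section IsUnicycle

variable {α : Type*} {f : α → α} {a b : α}

/-- The functional graph of `f` is a unicycle with `a` on its cycle, expressed by requiring every
forward orbit (including that of `f a`) to pass through `a`. -/
def IsUnicycle (f : α → α) (a : α) : Prop := ∀ y, ∃ n, f^[n] y = a

theorem exists_iterate_update_eq [DecidableEq α] (b : α) {y : α} (h : ∃ n, f^[n] y = a) :
    ∃ n, (Function.update f a b)^[n] y = a := by
  obtain ⟨n, hn⟩ := h
  induction n generalizing y with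
  | zero => exact ⟨0, hn⟩
  | succ n ih =>
    by_cases hy : y = a
    · exact ⟨0, hy⟩
    · obtain ⟨m, hm⟩ := ih hn
      exact ⟨m + 1, by rwa [Function.iterate_succ_apply, Function.update_of_ne hy]⟩

namespace IsUnicycle

theorem update [DecidableEq α] (h : IsUnicycle f a) (b : α) :
    IsUnicycle (Function.update f a b) a :=
  fun y => exists_iterate_update_eq b (h y)

theorem apply (h : IsUnicycle f a) : IsUnicycle f (f a) := fun y =>
  let ⟨n, hn⟩ := h y
  ⟨n + 1, by rw [Function.iterate_succ_apply', hn]⟩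

theorem mem_periodicPts (h : IsUnicycle f a) : a ∈ Function.periodicPts f :=
  let ⟨n, hn⟩ := h (f a)
  Function.mk_mem_periodicPts n.succ_pos hn

theorem eq_of_apply_eq (ha : IsUnicycle f a) (hb : IsUnicycle f b) (h : f a = f b) : a = b :=
  (Function.bijOn_periodicPts f).injOn ha.mem_periodicPts hb.mem_periodicPts h

end IsUnicycle

end IsUnicycle

section IsFirstReturn

variable {α : Type*} {F : α → α} {S U : Set α} {a a' b : α}

/-- `b` is the point at which the `F`-orbit of `a` enters `S` for the first time at a positive
time. -/
def IsFirstReturn (F : α → α) (S : Set α) (a b : α) : Prop :=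
  b ∈ S ∧ ∃ n, F^[n + 1] a = b ∧ ∀ i < n, F^[i + 1] a ∉ S

theorem eq_of_iterate_succ_eq_of_injOn (hU : Set.MapsTo F U U) (hF : Set.InjOn F U)
    (ha : a ∈ U ∩ S) (ha' : a' ∈ U) {n m : ℕ} (hnm : n ≤ m)
    (havoid : ∀ i < m, F^[i + 1] a' ∉ S) (h : F^[n + 1] a = F^[m + 1] a') : a = a' := by
  obtain ⟨k, rfl⟩ := Nat.exists_eq_add_of_le hnm
  have hk : a = F^[k] a' := by
    refine hF.iterate hU (n + 1) ha.1 (hU.iterate k ha') ?_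
    rw [h, ← Function.iterate_add_apply, Nat.add_right_comm]
  cases k with
  | zero => exact hk
  | succ k => exact absurd (hk ▸ ha.2) (havoid k (by omega))

theorem IsFirstReturn.eq_of_injOn (h : IsFirstReturn F S a b) (h' : IsFirstReturn F S a' b)
    (hU : Set.MapsTo F U U) (hF : Set.InjOn F U) (ha : a ∈ U ∩ S) (ha' : a' ∈ U ∩ S) :
    a = a' := by
  obtain ⟨-, n, hn, havoid⟩ := h
  obtain ⟨-, m, hm, havoid'⟩ := h'
  rcases le_total n m with hnm | hmn
  · exact eq_of_iterate_succ_eq_of_injOn hU hF ha ha'.1 hnm havoid' (hn.trans hm.symm)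
  · exact (eq_of_iterate_succ_eq_of_injOn hU hF ha' ha.1 hmn havoid (hm.trans hn.symm)).symm

theorem mem_periodicPts_of_injOn (hfin : U.Finite) (hU : Set.MapsTo F U U) (hF : Set.InjOn F U)
    (ha : a ∈ U) : a ∈ Function.periodicPts F := by
  have := hfin.to_subtype
  have hsemi : Function.Semiconj Subtype.val (hU.restrict F U U) F := fun _ => rfl
  exact hsemi.mapsTo_periodicPts ((hU.restrict_inj.2 hF).mem_periodicPts ⟨a, ha⟩)

end IsFirstReturn

namespace RotorGraph

variable {V : Type*} [Fintype V] [DecidableEq V] (G : RotorGraph V)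

/-- The rotors of `T`, together with an additional rotor at the sink pointing to `x`. -/
def closedNext (x : V) (T : G.Conf) : V → V := Function.update (G.next T) G.sink x

/-- The rotor-router walk in which a chip at the sink is returned to `x`. -/
def closedStep (x : V) (p : G.Conf × V) : G.Conf × V :=
  if p.2 = G.sink then (p.1, x) else G.step p

/-- The states whose rotors, closed up by the rotor from the sink to `x`, form a unicycle with the
chip on its cycle. -/
def unicycles (x : V) : Set (G.Conf × V) := {p | IsUnicycle (G.closedNext x p.1) p.2}

variable {G} {x : V} {T : G.Conf} {p q : G.Conf × V}

theorem step_of_ne (hp : p.2 ≠ G.sink) :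
    G.step p = (p.1 + Pi.single p.2 1, G.next (p.1 + Pi.single p.2 1) p.2) := by
  have hrotor : Function.update p.1 p.2 (p.1 p.2 + 1) = p.1 + Pi.single p.2 1 := by
    funext y
    by_cases hy : y = p.2
    · subst hy
      simp
    · simp [hy]
  simp [step, hp, hrotor, next]

theorem closedStep_of_eq (hp : p.2 = G.sink) : G.closedStep x p = (p.1, x) := if_pos hp

theorem closedStep_of_ne (hp : p.2 ≠ G.sink) : G.closedStep x p = G.step p := if_neg hp

theorem iterate_closedStep_eq {n : ℕ} (h : ∀ i < n, (G.step^[i] p).2 ≠ G.sink) :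
    (G.closedStep x)^[n] p = G.step^[n] p := by
  induction n with
  | zero => rfl
  | succ n ih =>
    rw [Function.iterate_succ_apply', Function.iterate_succ_apply',
      ih fun i hi => h i (hi.trans n.lt_succ_self), closedStep_of_ne (h n n.lt_succ_self)]

theorem iterate_succ_closedStep_sink {n : ℕ} (h : ∀ i < n, (G.step^[i] (T, x)).2 ≠ G.sink) :
    (G.closedStep x)^[n + 1] (T, G.sink) = G.step^[n] (T, x) := by
  rw [Function.iterate_succ_apply, closedStep_of_eq rfl, iterate_closedStep_eq h]

theorem closedNext_closedStep (x : V) (p : G.Conf × V) :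
    G.closedNext x (G.closedStep x p).1 =
      Function.update (G.closedNext x p.1) p.2 (G.closedStep x p).2 := by
  by_cases hp : p.2 = G.sink
  · simp [closedStep_of_eq hp, closedNext, hp]
  · rw [closedStep_of_ne hp, step_of_ne hp]
    funext y
    by_cases hy : y = p.2
    · subst hy
      simp [closedNext, hp]
    · simp [closedNext, Function.update_apply, next, hy]

theorem closedNext_closedStep_self (x : V) (p : G.Conf × V) :
    G.closedNext x (G.closedStep x p).1 p.2 = (G.closedStep x p).2 := by
  rw [closedNext_closedStep, Function.update_self]

theorem isUnicycle_closedNext_closedStep (hp : p ∈ G.unicycles x) :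
    IsUnicycle (G.closedNext x (G.closedStep x p).1) p.2 := by
  rw [closedNext_closedStep]
  exact hp.update _

theorem mapsTo_closedStep_unicycles (x : V) :
    Set.MapsTo (G.closedStep x) (G.unicycles x) (G.unicycles x) := by
  intro p hp
  have h := (isUnicycle_closedNext_closedStep hp).apply
  rwa [closedNext_closedStep_self] at h

theorem eq_of_closedStep_eq (hpos : p.2 = q.2) (h : G.closedStep x p = G.closedStep x q) :
    p = q := by
  refine Prod.ext ?_ hpos
  by_cases hp : p.2 = G.sink
  · rw [closedStep_of_eq hp, closedStep_of_eq (hpos ▸ hp)] at h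
    exact (Prod.ext_iff.1 h).1
  · rw [closedStep_of_ne hp, closedStep_of_ne (hpos ▸ hp), step_of_ne hp,
      step_of_ne (hpos ▸ hp), ← hpos] at h
    exact add_right_cancel (Prod.ext_iff.1 h).1

theorem injOn_closedStep_unicycles (x : V) : Set.InjOn (G.closedStep x) (G.unicycles x) := by
  intro p hp q hq h
  have hp' := isUnicycle_closedNext_closedStep hp
  have hq' := isUnicycle_closedNext_closedStep hq
  rw [← h] at hq'
  refine eq_of_closedStep_eq (hp'.eq_of_apply_eq hq' ?_) h
  rw [closedNext_closedStep_self, h, closedNext_closedStep_self]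

theorem hasCycleIn_of_forall_iterate_mem {A : Set V} {y : V} (h : ∀ n, (G.next T)^[n] y ∈ A) :
    G.HasCycleIn T A := by
  obtain ⟨i, j, hij, heq⟩ := A.toFinite.exists_lt_map_eq_of_forall_mem h
  refine ⟨j - i, (G.next T)^[i] y, Nat.sub_pos_of_lt hij, fun k _ => ?_, ?_⟩
  · rw [← Function.iterate_add_apply]
    exact h _
  · rw [← Function.iterate_add_apply, Nat.sub_add_cancel hij.le, heq]

theorem Rec.mem_unicycles (hT : G.Rec T) (x : V) : (T, G.sink) ∈ G.unicycles x := by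
  intro y
  refine exists_iterate_update_eq x ?_
  by_contra! hne
  exact hT (hasCycleIn_of_forall_iterate_mem hne)

theorem exists_iterate_step_eq_sink (hT : (T, G.sink) ∈ G.unicycles x) :
    ∃ n, (G.step^[n] (T, x)).2 = G.sink := by
  have (y : V) : NeZero (G.deg y) := ⟨(G.deg_pos y).ne'⟩
  obtain ⟨n, hn, hper⟩ := mem_periodicPts_of_injOn (Set.toFinite _)
    (mapsTo_closedStep_unicycles x) (injOn_closedStep_unicycles x) hT
  obtain ⟨m, rfl⟩ := Nat.exists_eq_add_one.2 hn
  by_contra! hne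
  have hreturn := (iterate_succ_closedStep_sink fun i _ => hne i).symm.trans hper
  exact hne m (congrArg Prod.snd hreturn)

theorem isFirstReturn_chip (h : ∃ n, (G.step^[n] (T, x)).2 = G.sink) :
    IsFirstReturn (G.closedStep x) {p | p.2 = G.sink} (T, G.sink) (G.chip x T, G.sink) := by
  classical
  have havoid : ∀ i < Nat.find h, (G.step^[i] (T, x)).2 ≠ G.sink := fun _ => Nat.find_min h
  refine ⟨rfl, Nat.find h, ?_, fun i hi => ?_⟩
  · rw [iterate_succ_closedStep_sink havoid, chip, dif_pos h]
    exact Prod.ext rfl (Nat.find_spec h)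
  · rw [iterate_succ_closedStep_sink fun j hj => havoid j (hj.trans hi)]
    exact havoid i hi

end RotorGraph

open RotorGraph in
theorem stmt3_general {V : Type*} [Fintype V] [DecidableEq V] (G : RotorGraph V) (x : V) :
    Set.InjOn (G.chip x) {T | G.Rec T} := by
  intro T₁ (h₁ : G.Rec T₁) T₂ (h₂ : G.Rec T₂) h
  have hu₁ := h₁.mem_unicycles x
  have hu₂ := h₂.mem_unicycles x
  have hreturn₁ := isFirstReturn_chip (exists_iterate_step_eq_sink hu₁)
  have hreturn₂ := isFirstReturn_chip (exists_iterate_step_eq_sink hu₂)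
  rw [← h] at hreturn₂
  have hstate : (T₁, G.sink) = (T₂, G.sink) :=
    hreturn₁.eq_of_injOn hreturn₂ (mapsTo_closedStep_unicycles x)
      (injOn_closedStep_unicycles x) ⟨hu₁, rfl⟩ ⟨hu₂, rfl⟩
  exact congrArg Prod.fst hstate

/-- If `T₁, T₂ ∈ Rec(G)` and `e_x(T₁) = e_x(T₂)`, then `T₁ = T₂`: the
operation `e_x` acts injectively on `Rec(G)`. -/
theorem stmt3 {V : Type*} [Fintype V] [DecidableEq V] (G : RotorGraph V)
    (hG : G.StronglyConnected) (x : V) (T1 T2 : G.Conf)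
    (h1 : G.Rec T1) (h2 : G.Rec T2) (h : G.chip x T1 = G.chip x T2) :
    T1 = T2 :=
  stmt3_general G x h1 h2 h
end

section
/- Let Y be a principal branch of the infinite ternary tree and let a = a_1…a_n be a binary word of length n. Then a is the escape sequence of the first n chips for some initial rotor configuration on Y if and only if a satisfies condition (P_k) for all k ≥ 1, i.e., for every k, every subword of a of length 2^k − 1 contains at most 2^{k−1} ones. -/
/-!
A principal branch `Y` of the infinite ternary tree.

`Y` is rooted at a neighbor `r` of the origin `o` and includes the edge
`(o, r)`, so `r` has degree 3 in `Y` and `o` has degree 1.  Vertices of `Y`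
other than `o` are encoded as lists over `Fin 2` (the root `r` is `[]` and
children are obtained by appending a letter: `0` = left, `1` = right); a chip
position is `Option (List (Fin 2))` with `none` standing for `o`.

Every vertex other than `o` carries a rotor with three directions indexed by
`ZMod 3`: value `0` (direction 1) points to the left child, value `1`
(direction 2) to the right child, and value `2` (direction 3) to the parent
(for `r`, to `o`).  A rotor-router step increments the rotor at the chip's
location, then moves the chip in the new direction.  Chips are started at `o`
one at a time; a chip immediately steps to `r` and then walks until it
returns to `o` (absorbing) or escapes to infinity, rotors persisting between
chips.
-/

/-- Rotor configurations on the branch `Y`. -/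
abbrev YConf := List (Fin 2) → ZMod 3

/-- One rotor-router step on `Y`; the origin `o` (= `none`) is absorbing. -/
def ystep (p : YConf × Option (List (Fin 2))) : YConf × Option (List (Fin 2)) :=
  match p with
  | (C, none) => (C, none)
  | (C, some w) =>
    let r := C w + 1
    let C' := Function.update C w r
    if h : r.val < 2 then (C', some (w ++ [⟨r.val, h⟩]))
    else (C', if w = [] then none else some w.dropLast)

/-- The chip started at `o` (which immediately steps to the root `r`)
eventually returns to `o`. -/
def ychipReturns (C : YConf) : Prop := ∃ k, (ystep^[k] (C, some [])).2 = none

/-- The rotor configuration left behind by one chip started at `o`: each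
rotor takes its eventual value along the trajectory (well-defined whether the
chip returns to `o` or escapes to infinity, since in the latter case it
visits each vertex only finitely often). -/
noncomputable def ynextConf (C : YConf) : YConf := fun v =>
  haveI := Classical.dec (∃ c : ZMod 3, ∃ K : ℕ, ∀ k, K ≤ k → (ystep^[k] (C, some [])).1 v = c)
  if h : ∃ c : ZMod 3, ∃ K : ℕ, ∀ k, K ≤ k → (ystep^[k] (C, some [])).1 v = c then
    h.choose
  else C v

/-- The rotor configuration seen by the `(j+1)`-st chip. -/
noncomputable def yconfSeq (C0 : YConf) : ℕ → YConf
  | 0 => C0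
  | j + 1 => ynextConf (yconfSeq C0 j)

/-- The `(j+1)`-st chip (`j = 0, 1, 2, …`) escapes to infinity. -/
def yescapes (C0 : YConf) (j : ℕ) : Prop := ¬ ychipReturns (yconfSeq C0 j)

/-- Condition `(P_k)` for a binary word: every subword (block of consecutive
letters) of length `2ᵏ − 1` contains at most `2^(k−1)` ones. -/
def CondP (w : List Bool) (k : ℕ) : Prop :=
  ∀ i : ℕ, i + (2 ^ k - 1) ≤ w.length →
    ((w.drop i).take (2 ^ k - 1)).count true ≤ 2 ^ (k - 1)

/-!
Follow the root's rotor through full turns.  Once it points to the parent, the next turn sends one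
chip into each child's sub-branch and one back to `o`; a chip returning from a sub-branch continues
as the next chip of the turn.  So each turn contributes a block `1^s 0` to the escape sequence,
where `s ∈ {0, 1, 2}` is the number of sub-branches from which the chip escapes.  Hence the ones of
the escape sequence are dealt out to the escape sequences of the two sub-branches, the zeros marking
the turns.

A window with `b` ones and `m` zeros corresponds to `m` consecutive turns, so a bound of
`b = 2^(k+1)` ones in windows of length `2^(k+2) - 1` is a bound of `b` escapes in
`m = 2^(k+1) - 1` turns, and this splits evenly over the two sub-branches: `(P_(k+2))` on `Y`
corresponds to `(P_(k+1))` on the sub-branches.  Conversely, dealing the ones alternately to the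
left and right sub-branches halves every bound, and the rotors can be chosen by recursion.
-/

open Filter

/-! ### Walks and their limit configurations -/

/-- The walk from the state `p` visits the state `p'`. -/
def Reaches (p p' : YConf × Option (List (Fin 2))) : Prop := ∃ n, ystep^[n] p = p'

/-- The rotors along the walk from `p` converge pointwise to `C`. -/
def Leaves (p : YConf × Option (List (Fin 2))) (C : YConf) : Prop :=
  ∀ v, ∀ᶠ k in atTop, (ystep^[k] p).1 v = C v

/-- The walk from `p` never gets to the origin, and leaves the rotor configuration `C` behind. -/
structure EscapesTo (p : YConf × Option (List (Fin 2))) (C : YConf) : Prop where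
  not_reaches : ¬ ∃ D, Reaches p (D, none)
  leaves : Leaves p C

/-- The rotor at `v` is eventually constant along the walk from `p`. -/
def Settles (p : YConf × Option (List (Fin 2))) (v : List (Fin 2)) : Prop :=
  ∃ c, ∀ᶠ k in atTop, (ystep^[k] p).1 v = c

theorem iterate_ystep_none (C : YConf) (k : ℕ) : ystep^[k] (C, none) = (C, none) :=
  Function.iterate_fixed rfl k

section Reaches

variable {p p' p'' : YConf × Option (List (Fin 2))} {C : YConf}

theorem Reaches.trans (h : Reaches p p') (h' : Reaches p' p'') : Reaches p p'' := by
  obtain ⟨m, rfl⟩ := h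
  obtain ⟨n, rfl⟩ := h'
  exact ⟨n + m, Function.iterate_add_apply _ _ _ _⟩

theorem reaches_of_ystep_eq (h : ystep p = p') : Reaches p p' := ⟨1, h⟩

theorem Reaches.reaches_none (h : Reaches p p') (hC : Reaches p (C, none)) :
    Reaches p' (C, none) := by
  obtain ⟨m, rfl⟩ := h
  obtain ⟨n, hn⟩ := hC
  exact ⟨n, by rw [← Function.iterate_add_apply, add_comm, Function.iterate_add_apply, hn,
    iterate_ystep_none]⟩

theorem Reaches.eventually {P : YConf × Option (List (Fin 2)) → Prop} (h : Reaches p p')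
    (hP : ∀ᶠ k in atTop, P (ystep^[k] p')) : ∀ᶠ k in atTop, P (ystep^[k] p) := by
  obtain ⟨n, rfl⟩ := h
  rw [← map_add_atTop_eq_nat n, eventually_map]
  simpa only [Function.iterate_add_apply] using hP

theorem Reaches.escapesTo (h : Reaches p p') (h' : EscapesTo p' C) : EscapesTo p C where
  not_reaches := fun ⟨D, hD⟩ => h'.not_reaches ⟨D, h.reaches_none hD⟩
  leaves v := h.eventually (P := fun s => s.1 v = C v) (h'.leaves v)

theorem Reaches.leaves (h : Reaches p (C, none)) : Leaves p C := fun v =>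
  h.eventually (P := fun s => s.1 v = C v) (.of_forall fun k => by rw [iterate_ystep_none])

theorem Reaches.settles {v : List (Fin 2)} (h : Reaches p p') (h' : Settles p' v) : Settles p v :=
  h'.imp fun c => h.eventually (P := fun s => s.1 v = c)

end Reaches

theorem ychipReturns_iff_reaches {C : YConf} :
    ychipReturns C ↔ ∃ D, Reaches (C, some []) (D, none) :=
  ⟨fun ⟨k, hk⟩ => ⟨_, k, Prod.ext rfl hk⟩, fun ⟨_, k, hk⟩ => ⟨k, by rw [hk]⟩⟩

theorem Leaves.ynextConf_eq {C C' : YConf} (h : Leaves (C, some []) C') : ynextConf C = C' := by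
  funext v
  have hex : ∃ c : ZMod 3, ∃ K : ℕ, ∀ k, K ≤ k → (ystep^[k] (C, some [])).1 v = c :=
    ⟨C' v, eventually_atTop.1 (h v)⟩
  simp only [ynextConf, dif_pos hex]
  obtain ⟨k, hchoose, hlimit⟩ := ((eventually_atTop.2 hex.choose_spec).and (h v)).exists
  exact hchoose.symm.trans hlimit

/-! ### Sub-branches -/

/-- The configuration with rotor `q` at the root and the configuration `f x` on the sub-branch
rooted at its child `x`. -/
def joinConf (q : ZMod 3) (f : Fin 2 → YConf) : YConf
  | [] => q
  | x :: w => f x w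

/-- The position in `Y` of a chip on the sub-branch at child `x`, whose origin is the root of
`Y`. -/
def liftPos (x : Fin 2) : Option (List (Fin 2)) → Option (List (Fin 2))
  | none => some []
  | some w => some (x :: w)

theorem exists_joinConf (C : YConf) : ∃ q f, C = joinConf q f := by
  refine ⟨C [], fun x w => C (x :: w), funext fun v => ?_⟩
  cases v <;> rfl

section SubBranch

variable (q : ZMod 3) (f : Fin 2 → YConf) (x : Fin 2)

theorem update_joinConf_nil (c : ZMod 3) :
    Function.update (joinConf q f) [] c = joinConf c f := by
  funext v
  cases v <;> simp [joinConf]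

theorem update_joinConf_cons (w : List (Fin 2)) (c : ZMod 3) :
    Function.update (joinConf q f) (x :: w) c =
      joinConf q (Function.update f x (Function.update (f x) w c)) := by
  funext v
  rcases v with _ | ⟨y, v⟩
  · simp [joinConf]
  · obtain rfl | hy := eq_or_ne y x
    · obtain rfl | hv := eq_or_ne v w <;> simp [joinConf, *]
    · simp [joinConf, hy]

theorem ystep_joinConf_cons (w : List (Fin 2)) :
    ystep (joinConf q f, some (x :: w)) =
      (joinConf q (Function.update f x (ystep (f x, some w)).1),
        liftPos x (ystep (f x, some w)).2) := by
  have hrotor : joinConf q f (x :: w) = f x w := rfl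
  simp only [ystep, hrotor, update_joinConf_cons, reduceCtorEq, if_false]
  split_ifs with hdown hw
  · rfl
  · subst hw
    rfl
  · simp [liftPos, List.dropLast_cons_of_ne_nil hw]

theorem reaches_joinConf_zero : Reaches (joinConf 0 f, some []) (joinConf 1 f, some [1]) := by
  have hrotor : joinConf 0 f [] + 1 = 1 := rfl
  refine reaches_of_ystep_eq ?_
  simp only [ystep, hrotor, update_joinConf_nil]
  rfl

theorem reaches_joinConf_one : Reaches (joinConf 1 f, some []) (joinConf 2 f, none) := by
  have hrotor : joinConf 1 f [] + 1 = 2 := rfl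
  refine reaches_of_ystep_eq ?_
  simp only [ystep, hrotor, update_joinConf_nil]
  rfl

theorem reaches_joinConf_two : Reaches (joinConf 2 f, some []) (joinConf 0 f, some [0]) := by
  have hrotor : joinConf 2 f [] + 1 = 0 := rfl
  refine reaches_of_ystep_eq ?_
  simp only [ystep, hrotor, update_joinConf_nil]
  rfl

variable {f x}

theorem iterate_ystep_joinConf_of_not_reaches (hx : ¬ ∃ D, Reaches (f x, some []) (D, none))
    (k : ℕ) :
    ystep^[k] (joinConf q f, some [x]) =
      (joinConf q (Function.update f x (ystep^[k] (f x, some [])).1),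
        liftPos x (ystep^[k] (f x, some [])).2) := by
  induction k with
  | zero => simp [liftPos]
  | succ k ih =>
    rw [Function.iterate_succ_apply', ih, Function.iterate_succ_apply']
    rcases hk : ystep^[k] (f x, some []) with ⟨C, _ | w⟩
    · exact absurd ⟨C, k, hk⟩ hx
    · simp [liftPos, ystep_joinConf_cons]

theorem EscapesTo.joinConf_child {g : YConf} (h : EscapesTo (f x, some []) g) :
    EscapesTo (joinConf q f, some [x]) (joinConf q (Function.update f x g)) := by
  have hwalk := iterate_ystep_joinConf_of_not_reaches q h.not_reaches
  refine ⟨?_, fun v => ?_⟩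
  · rintro ⟨D, k, hk⟩
    rw [hwalk, Prod.mk.injEq] at hk
    cases hpos : (ystep^[k] (f x, some [])).2 <;> simp [hpos, liftPos] at hk
  · simp only [hwalk]
    rcases v with _ | ⟨y, w⟩
    · exact .of_forall fun _ => rfl
    · obtain rfl | hy := eq_or_ne y x
      · simpa [joinConf] using h.leaves w
      · exact .of_forall fun _ => by simp [joinConf, hy]

theorem Reaches.joinConf_child {w : List (Fin 2)} {g : YConf}
    (h : Reaches (f x, some w) (g, none)) :
    Reaches (joinConf q f, some (x :: w)) (joinConf q (Function.update f x g), some []) := by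
  obtain ⟨n, hn⟩ := h
  induction n generalizing f w with
  | zero => simp at hn
  | succ n ih =>
    refine (reaches_of_ystep_eq (ystep_joinConf_cons q f x w)).trans ?_
    rw [Function.iterate_succ_apply] at hn
    rcases hstep : ystep (f x, some w) with ⟨C, _ | u⟩ <;> rw [hstep] at hn
    · obtain rfl : C = g := by simpa [iterate_ystep_none] using hn
      exact ⟨0, rfl⟩
    · simpa [liftPos] using ih (f := Function.update f x C) (w := u) (by simpa using hn)

theorem settles_joinConf_child {v : List (Fin 2)}
    (hchild : ∀ w, v = x :: w → Settles (f x, some []) w)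
    (hroot : ∀ g, Settles (joinConf q g, some []) v) : Settles (joinConf q f, some [x]) v := by
  by_cases hx : ∃ D, Reaches (f x, some []) (D, none)
  · obtain ⟨D, hD⟩ := hx
    exact (hD.joinConf_child q).settles (hroot _)
  · simp only [Settles, iterate_ystep_joinConf_of_not_reaches q hx]
    rcases v with _ | ⟨y, w⟩
    · exact ⟨q, .of_forall fun _ => rfl⟩
    · obtain rfl | hy := eq_or_ne y x
      · simpa [joinConf, Settles] using hchild w rfl
      · exact ⟨f y w, .of_forall fun _ => by simp [joinConf, hy]⟩

end SubBranch

theorem zmod_three_cases (q : ZMod 3) : q = 0 ∨ q = 1 ∨ q = 2 := by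
  revert q
  decide

theorem settles_joinConf {v : List (Fin 2)}
    (hchild : ∀ C x w, v = x :: w → Settles (C, some []) w) (q : ZMod 3) (f : Fin 2 → YConf) :
    Settles (joinConf q f, some []) v := by
  have rotor_one : ∀ g, Settles (joinConf 1 g, some []) v := fun g =>
    (reaches_joinConf_one g).settles ⟨_, .of_forall fun k => by rw [iterate_ystep_none]⟩
  have rotor_zero : ∀ g, Settles (joinConf 0 g, some []) v := fun g =>
    (reaches_joinConf_zero g).settles (settles_joinConf_child 1 (hchild _ _) rotor_one)
  have rotor_two : ∀ g, Settles (joinConf 2 g, some []) v := fun g =>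
    (reaches_joinConf_two g).settles (settles_joinConf_child 0 (hchild _ _) rotor_zero)
  obtain rfl | rfl | rfl := zmod_three_cases q
  exacts [rotor_zero f, rotor_one f, rotor_two f]

theorem settles (C : YConf) (v : List (Fin 2)) : Settles (C, some []) v := by
  obtain ⟨q, f, rfl⟩ := exists_joinConf C
  induction v generalizing q f with
  | nil => exact settles_joinConf (by simp) q f
  | cons y u ih =>
    refine settles_joinConf (fun C x w hw => ?_) q f
    obtain ⟨q', f', rfl⟩ := exists_joinConf C
    rw [(List.cons.inj hw).2] at ih
    exact ih q' f'

theorem reaches_or_escapesTo_ynextConf (C : YConf) :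
    Reaches (C, some []) (ynextConf C, none) ∨ EscapesTo (C, some []) (ynextConf C) := by
  by_cases hret : ∃ D, Reaches (C, some []) (D, none)
  · obtain ⟨D, hD⟩ := hret
    exact .inl (by rwa [hD.leaves.ynextConf_eq])
  · choose D hD using settles C
    have hleaves : Leaves (C, some []) D := hD
    exact .inr ⟨hret, by rwa [hleaves.ynextConf_eq]⟩

/-! ### Escape sequences -/

open Classical in
/-- The number of escaping chips among the first `n` chips, for the initial configuration `C`. -/
noncomputable def escCount (C : YConf) (n : ℕ) : ℕ := Nat.count (yescapes C) n

theorem yconfSeq_add (C : YConf) (m n : ℕ) :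
    yconfSeq C (m + n) = yconfSeq (yconfSeq C m) n := by
  induction n with
  | zero => rfl
  | succ n ih => rw [← add_assoc, yconfSeq, ih, yconfSeq]

theorem escCount_zero (C : YConf) : escCount C 0 = 0 := by
  classical exact Nat.count_zero _

theorem escCount_add (C : YConf) (m n : ℕ) :
    escCount C (m + n) = escCount C m + escCount (yconfSeq C m) n := by
  rw [escCount, escCount, escCount, Nat.count_add]
  congr! 3 with j
  rw [yescapes, yescapes, yconfSeq_add]

theorem escCount_one_eq_ite (C : YConf) [Decidable (ychipReturns C)] :
    escCount C 1 = if ychipReturns C then 0 else 1 := by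
  by_cases h : ychipReturns C <;> simp [escCount, Nat.count_succ, yescapes, yconfSeq, h]

theorem Reaches.escCount_one {C D : YConf} (h : Reaches (C, some []) (D, none)) :
    escCount C 1 = 0 := by
  classical
  rw [escCount_one_eq_ite, if_pos (ychipReturns_iff_reaches.2 ⟨D, h⟩)]

theorem EscapesTo.escCount_one {C D : YConf} (h : EscapesTo (C, some []) D) :
    escCount C 1 = 1 := by
  classical
  rw [escCount_one_eq_ite, if_neg (mt ychipReturns_iff_reaches.1 h.not_reaches)]

theorem Leaves.escCount_one_add {C D : YConf} (h : Leaves (C, some []) D) (n : ℕ) :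
    escCount C (1 + n) = escCount C 1 + escCount D n := by
  rw [escCount_add, yconfSeq, yconfSeq, h.ynextConf_eq]

/-- Starting from a given configuration, the next `s` chips escape, the one after them returns
to `o`, and together they leave a given configuration behind: the escape sequence starts with the
block `1^s 0`. -/
inductive EmitsBlock : YConf → ℕ → YConf → Prop
  | of_reaches {C D : YConf} (h : Reaches (C, some []) (D, none)) : EmitsBlock C 0 D
  | of_escapesTo {C D E : YConf} {s : ℕ} (h : EscapesTo (C, some []) D) (h' : EmitsBlock D s E) :
      EmitsBlock C (1 + s) E

theorem EmitsBlock.of_reaches_root {C D E : YConf} {s : ℕ}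
    (hCD : Reaches (C, some []) (D, some [])) (h : EmitsBlock D s E) : EmitsBlock C s E := by
  cases h with
  | of_reaches h => exact .of_reaches (hCD.trans h)
  | of_escapesTo h h' => exact .of_escapesTo (hCD.escapesTo h) h'

theorem EmitsBlock.escCount_eq {C D : YConf} {s : ℕ} (h : EmitsBlock C s D) :
    escCount C s = s := by
  induction h with
  | of_reaches _ => exact escCount_zero _
  | of_escapesTo h _ ih => rw [h.leaves.escCount_one_add, h.escCount_one, ih]

theorem EmitsBlock.escCount_add {C D : YConf} {s : ℕ} (h : EmitsBlock C s D) (n : ℕ) :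
    escCount C (s + 1 + n) = s + escCount D n := by
  induction h with
  | of_reaches h => rw [zero_add, h.leaves.escCount_one_add, h.escCount_one]
  | of_escapesTo h _ ih =>
    rw [add_assoc, add_assoc, ← add_assoc _ 1 n, h.leaves.escCount_one_add, h.escCount_one, ih,
      add_assoc]

theorem emitsBlock_joinConf_one (f : Fin 2 → YConf) : EmitsBlock (joinConf 1 f) 0 (joinConf 2 f) :=
  .of_reaches (reaches_joinConf_one f)

theorem emitsBlock_joinConf_zero (f : Fin 2 → YConf) :
    EmitsBlock (joinConf 0 f) (escCount (f 1) 1)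
      (joinConf 2 (Function.update f 1 (ynextConf (f 1)))) := by
  have hstart := reaches_joinConf_zero f
  rcases reaches_or_escapesTo_ynextConf (f 1) with hret | hesc
  · rw [hret.escCount_one]
    exact (emitsBlock_joinConf_one _).of_reaches_root (hstart.trans (hret.joinConf_child 1))
  · rw [hesc.escCount_one]
    exact .of_escapesTo (hstart.escapesTo (hesc.joinConf_child 1)) (emitsBlock_joinConf_one _)

theorem emitsBlock_joinConf_two (f : Fin 2 → YConf) :
    EmitsBlock (joinConf 2 f) (escCount (f 0) 1 + escCount (f 1) 1)
      (joinConf 2 fun x => ynextConf (f x)) := by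
  have hstart := reaches_joinConf_two f
  have hright := emitsBlock_joinConf_zero (Function.update f 0 (ynextConf (f 0)))
  have hupdate : Function.update (Function.update f 0 (ynextConf (f 0))) 1 (ynextConf (f 1)) =
      fun x => ynextConf (f x) := by
    funext x
    fin_cases x <;> simp
  rw [Function.update_of_ne (by decide), hupdate] at hright
  rcases reaches_or_escapesTo_ynextConf (f 0) with hret | hesc
  · rw [hret.escCount_one, zero_add]
    exact hright.of_reaches_root (hstart.trans (hret.joinConf_child 0))
  · rw [hesc.escCount_one]
    exact .of_escapesTo (hstart.escapesTo (hesc.joinConf_child 0)) hright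

/-- Whether (`1`) or not (`0`) the first turn of the root's rotor, if it starts from `q`, skips
child `x`: it does if `x` precedes `q + 1`, the first value that the rotor takes. -/
def delay (q : ZMod 3) (x : Fin 2) : ℕ := if x.val < (q + 1).val then 1 else 0

theorem delay_le_one (q : ZMod 3) (x : Fin 2) : delay q x ≤ 1 := by
  unfold delay
  split_ifs <;> decide

theorem delay_one (x : Fin 2) : delay 1 x = 1 := by
  revert x
  decide

theorem delay_two (x : Fin 2) : delay 2 x = 0 := by
  revert x
  decide

theorem emitsBlock_joinConf (q : ZMod 3) (f : Fin 2 → YConf) :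
    EmitsBlock (joinConf q f) (∑ x, escCount (f x) (1 - delay q x))
      (joinConf 2 fun x => yconfSeq (f x) (1 - delay q x)) := by
  obtain rfl | rfl | rfl := zmod_three_cases q
  · have left : delay 0 0 = 1 := rfl
    have right : delay 0 1 = 0 := rfl
    convert emitsBlock_joinConf_zero f using 2
    · simp [left, right, escCount_zero]
    · funext x
      fin_cases x <;> simp [left, right, yconfSeq]
  · simpa [delay_one, escCount_zero, yconfSeq] using emitsBlock_joinConf_one f
  · simpa [delay_two, yconfSeq] using emitsBlock_joinConf_two f

/-! ### Counting functions of binary sequences -/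

/-- `A n` is the number of ones among the first `n` letters of some infinite binary sequence. -/
structure IsCount (A : ℕ → ℕ) : Prop where
  zero : A 0 = 0
  le_succ : ∀ n, A n ≤ A (n + 1)
  succ_le : ∀ n, A (n + 1) ≤ A n + 1

/-- Every window of length `n` contributes at most `b` to the counting function `A`. -/
def WindowBound (n b : ℕ) (A : ℕ → ℕ) : Prop := ∀ i, A (i + n) ≤ A i + b

/-- The binary sequence counted by `A` is `1^(s 0) 0 1^(s 1) 0 …`, where `s` has the partial sums
`S i = s 0 + … + s (i - 1)`. The fields say that the `i`-th block of ones starts after `i + S i`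
letters and ends after `i + S (i + 1)` letters. -/
structure Encodes (A S : ℕ → ℕ) : Prop extends IsCount A where
  sum_zero : S 0 = 0
  block_start : ∀ i, A (i + S i) = S i
  block_end : ∀ i, A (i + S (i + 1)) = S (i + 1)

theorem isCount_count (p : ℕ → Prop) [DecidablePred p] : IsCount (Nat.count p) where
  zero := Nat.count_zero p
  le_succ n := Nat.count_monotone p n.le_succ
  succ_le n := by
    rw [Nat.count_succ]
    split_ifs <;> omega

section IsCount

variable {A : ℕ → ℕ}

theorem IsCount.monotone (hA : IsCount A) : Monotone A := monotone_nat_of_le_succ hA.le_succ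

theorem IsCount.windowBound_self (hA : IsCount A) (n : ℕ) : WindowBound n n A := fun i => by
  induction n with
  | zero => exact le_rfl
  | succ n ih => exact (hA.succ_le _).trans (Nat.succ_le_succ ih)

theorem IsCount.le_add_sub (hA : IsCount A) {i j : ℕ} (hij : i ≤ j) : A j ≤ A i + (j - i) := by
  simpa only [Nat.add_sub_cancel' hij] using hA.windowBound_self (j - i) i

theorem IsCount.le_self (hA : IsCount A) (n : ℕ) : A n ≤ n := by
  simpa [hA.zero] using hA.le_add_sub n.zero_le

theorem IsCount.add_eq_of_ne {t s : ℕ} (hA : IsCount A)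
    (hne : ∀ j < s, A (t + j + 1) ≠ A (t + j)) : A (t + s) = A t + s := by
  induction s with
  | zero => rfl
  | succ s ih =>
    have hone := hne s s.lt_succ_self
    have hlo := hA.le_succ (t + s)
    have hhi := hA.succ_le (t + s)
    rw [ih fun j hj => hne j (by omega)] at hone hlo hhi
    rw [← add_assoc]
    omega

theorem IsCount.exists_block {n b : ℕ} (hA : IsCount A) (hbn : b < n) (h : WindowBound n b A)
    (t : ℕ) : ∃ s, A (t + s) = A t + s ∧ A (t + s + 1) = A t + s := by
  classical
  have hzero : ∃ s, A (t + s + 1) = A (t + s) := by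
    by_contra! hne
    have hones := hA.add_eq_of_ne fun j (_ : j < n) => hne j
    have hle := h t
    omega
  have hblock := hA.add_eq_of_ne fun j => Nat.find_min hzero
  exact ⟨Nat.find hzero, hblock, (Nat.find_spec hzero).trans hblock⟩

end IsCount

section WindowBound

variable {n b : ℕ} {A : ℕ → ℕ}

theorem WindowBound.shift_right (h : WindowBound n b A) (hA : Monotone A) (d : ℕ) :
    WindowBound n b fun i => A (i - d) := fun i =>
  (hA (by omega)).trans (h (i - d))

theorem WindowBound.shift_left (h : WindowBound n b A) (d : ℕ) :
    WindowBound n b fun i => A (i + d) := fun i => by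
  simpa only [add_right_comm] using h (i + d)

theorem WindowBound.trans {n' b' : ℕ} (h : WindowBound n b A) (h' : WindowBound n' b' A) :
    WindowBound (n + n') (b + b') A := fun i => by
  have hfirst := h i
  have hsecond := h' (i + n)
  rw [add_assoc] at hsecond
  omega

theorem WindowBound.sum {ι : Type*} [Fintype ι] {B : ι → ℕ → ℕ} (h : ∀ x, WindowBound n b (B x)) :
    WindowBound n (Fintype.card ι * b) fun i => ∑ x, B x i := fun i => by
  calc ∑ x, B x (i + n) ≤ ∑ x, (B x i + b) := Finset.sum_le_sum fun x _ => h x i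
    _ = ∑ x, B x i + Fintype.card ι * b := by simp [Finset.sum_add_distrib]

end WindowBound

section Encodes

variable {A B S T : ℕ → ℕ}

theorem Encodes.monotone_sum (h : Encodes A S) : Monotone S := by
  refine monotone_nat_of_le_succ fun i => ?_
  have hnext := h.block_start (i + 1)
  have hstart := h.block_start i
  by_contra! hlt
  have hle := h.le_add_sub (show i + 1 + S (i + 1) ≤ i + S i by omega)
  omega

theorem Encodes.le_count (h : Encodes A S) (p : ℕ) : S (p - A p) ≤ A p := by
  rcases hu : p - A p with _ | u
  · simp [h.sum_zero]
  · by_contra! hlt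
    have hend := h.block_end u
    have hle := h.le_add_sub (show p ≤ u + S (u + 1) by omega)
    omega

theorem Encodes.count_le (h : Encodes A S) (p : ℕ) : A p ≤ S (p - A p + 1) := by
  by_contra! hlt
  have hself := h.le_self p
  have hstart := h.block_start (p - A p + 1)
  have hle := h.le_add_sub
    (show p - A p + 1 + S (p - A p + 1) ≤ p from
      (h.monotone.reflect_lt (hstart.trans_lt hlt)).le)
  omega

/-- A window with `b + 1` ones and `m - 1` zeros lies within `m` consecutive blocks, and any `m`
consecutive blocks with more than `b` ones contain such a window. -/
theorem Encodes.windowBound_iff (h : Encodes A S) (b m : ℕ) :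
    WindowBound (b + m) b A ↔ WindowBound m b S := by
  constructor <;> intro hbound
  · rintro i
    rcases m with _ | m
    · exact Nat.le_add_right _ _
    by_contra! hlt
    have hstart := h.block_start i
    have hend := h.block_end (i + m)
    have hwindow := hbound (i + S i)
    rw [← add_assoc] at hlt
    have hle := h.le_add_sub (show i + S i + (b + (m + 1)) ≤ i + m + S (i + m + 1) by omega)
    omega
  · intro p
    by_contra! hlt
    have hself := h.le_self (p + (b + m))
    have hself' := h.le_self p
    have hblocks := hbound (p - A p)
    have hlast := h.count_le (p + (b + m))
    have hfirst := h.le_count p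
    have hzeros := h.monotone_sum
      (show p + (b + m) - A (p + (b + m)) + 1 ≤ p - A p + m by omega)
    omega

theorem Encodes.le_of_forall_eq (hA : Encodes A S) (hB : Encodes B T) {n : ℕ}
    (hST : ∀ i ≤ n, S i = T i) {j : ℕ} (hj : j ≤ n + S n) : B j ≤ A j := by
  by_contra! hlt
  have hself := hB.le_self j
  have hstart := hA.block_start n
  have hzeros := hA.le_add_sub hj
  refine hlt.not_ge ?_
  calc B j ≤ T (j - B j + 1) := hB.count_le j
    _ = S (j - B j + 1) := (hST _ (by omega)).symm
    _ ≤ S (j - A j) := hA.monotone_sum (by omega)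
    _ ≤ A j := hA.le_count j

theorem Encodes.eq_of_forall_eq (hA : Encodes A S) (hB : Encodes B T) {n : ℕ}
    (hST : ∀ i ≤ n, S i = T i) {j : ℕ} (hj : j ≤ n + S n) : A j = B j :=
  (hB.le_of_forall_eq hA (fun i hi => (hST i hi).symm) (hST n le_rfl ▸ hj)).antisymm
    (hA.le_of_forall_eq hB hST hj)

theorem exists_encodes {n b : ℕ} (hA : IsCount A) (hbn : b < n) (h : WindowBound n b A) :
    ∃ S, Encodes A S := by
  choose s hones hzero using hA.exists_block hbn h
  let S : ℕ → ℕ := Nat.rec 0 fun i x => x + s (i + x)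
  have S_succ : ∀ i, S (i + 1) = S i + s (i + S i) := fun i => rfl
  have block_start : ∀ i, A (i + S i) = S i := by
    intro i
    induction i with
    | zero => exact hA.zero
    | succ i ih =>
      rw [S_succ, show i + 1 + (S i + s (i + S i)) = i + S i + s (i + S i) + 1 by omega, hzero, ih]
  exact ⟨S, hA, rfl, block_start, fun i => by rw [S_succ, ← add_assoc, hones, block_start]⟩

end Encodes

/-! ### The window bounds -/

theorem isCount_escCount (C : YConf) : IsCount (escCount C) := by
  classical exact isCount_count (yescapes C)

theorem encodes_joinConf (q : ZMod 3) (f : Fin 2 → YConf) :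
    Encodes (escCount (joinConf q f)) fun i => ∑ x, escCount (f x) (i - delay q x) := by
  have sum_succ : ∀ (q : ZMod 3) (f : Fin 2 → YConf) (i : ℕ),
      ∑ x, escCount (f x) (i + 1 - delay q x) = ∑ x, escCount (f x) (1 - delay q x) +
        ∑ x, escCount (yconfSeq (f x) (1 - delay q x)) (i - delay 2 x) := by
    intro q f i
    rw [← Finset.sum_add_distrib]
    refine Finset.sum_congr rfl fun x _ => ?_
    rw [delay_two, Nat.sub_zero, ← escCount_add]
    have := delay_le_one q x
    congr 1
    omega
  have add_block : ∀ i s t : ℕ, i + 1 + (s + t) = s + 1 + (i + t) := by omega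
  refine ⟨isCount_escCount _, by simp [escCount_zero], fun i => ?_, fun i => ?_⟩
  · induction i generalizing q f with
    | zero => simp [escCount_zero]
    | succ i ih => rw [sum_succ, add_block, (emitsBlock_joinConf q f).escCount_add, ih]
  · induction i generalizing q f with
    | zero => simpa using (emitsBlock_joinConf q f).escCount_eq
    | succ i ih => rw [sum_succ, add_block, (emitsBlock_joinConf q f).escCount_add, ih]

theorem two_pow_add_two_sub_one (k : ℕ) :
    2 ^ (k + 1 + 1) - 1 = 2 ^ (k + 1) + (2 ^ (k + 1) - 1) := by
  have := Nat.one_le_two_pow (n := k + 1)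
  rw [pow_succ 2 (k + 1)]
  omega

theorem windowBound_escCount (k : ℕ) (C : YConf) :
    WindowBound (2 ^ (k + 1) - 1) (2 ^ k) (escCount C) := by
  induction k generalizing C with
  | zero => exact (isCount_escCount C).windowBound_self 1
  | succ k ih =>
    obtain ⟨q, f, rfl⟩ := exists_joinConf C
    rw [two_pow_add_two_sub_one, (encodes_joinConf q f).windowBound_iff]
    simpa only [Fintype.card_fin, ← pow_succ'] using
      WindowBound.sum fun x => (ih (f x)).shift_right (isCount_escCount _).monotone _

/-! ### Realizing sequences that satisfy the window bounds -/

/-- The counting function of the share of child `x` if ones with block sums `S` are dealt out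
alternately to the two children, starting with child `0`. -/
def deal (S : ℕ → ℕ) (x : Fin 2) (i : ℕ) : ℕ := (S i + 1 - x) / 2

theorem sum_deal (S : ℕ → ℕ) (i : ℕ) : ∑ x, deal S x i = S i := by
  simp only [deal, Fin.sum_univ_two, Fin.val_zero, Fin.val_one]
  omega

theorem windowBound_deal {S : ℕ → ℕ} {n b : ℕ} (h : WindowBound n (2 * b) S) (x : Fin 2) :
    WindowBound n b (deal S x) := fun i => by
  have := h i
  unfold deal
  omega

theorem isCount_deal {S : ℕ → ℕ} (h0 : S 0 = 0) (hS : Monotone S) (h2 : WindowBound 1 2 S)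
    (x : Fin 2) : IsCount (deal S x) where
  zero := by
    rw [deal, h0]
    omega
  le_succ n := Nat.div_le_div_right (Nat.sub_le_sub_right (Nat.succ_le_succ (hS n.le_succ)) _)
  succ_le := windowBound_deal (b := 1) h2 x

theorem escCount_const_two_one : escCount (fun _ => 2) 1 = 1 := by
  have walk : ∀ k, ∃ C, ystep^[k] ((fun _ => 2 : YConf), some []) =
      (C, some (List.replicate k 0)) ∧ ∀ w, k ≤ w.length → C w = 2 := by
    intro k
    induction k with
    | zero => exact ⟨_, rfl, fun _ _ => rfl⟩
    | succ k ih =>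
      obtain ⟨C, hC, htwo⟩ := ih
      have hrotor : C (List.replicate k 0) + 1 = 0 := by
        rw [htwo _ (by simp)]
        rfl
      refine ⟨Function.update C (List.replicate k 0) 0, ?_, fun w hw => ?_⟩
      · rw [Function.iterate_succ_apply', hC, List.replicate_succ']
        simp only [ystep, hrotor]
        rfl
      · rw [Function.update_of_ne, htwo w (by omega)]
        rintro rfl
        simp at hw
  classical
  rw [escCount_one_eq_ite, if_neg]
  rintro ⟨k, hk⟩
  obtain ⟨C, hC, -⟩ := walk k
  simp [hC] at hk

theorem exists_escCount_one_eq {A : ℕ → ℕ} (hA : IsCount A) : ∃ C, escCount C 1 = A 1 := by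
  rcases Nat.le_one_iff_eq_zero_or_eq_one.1 (hA.le_self 1) with h | h
  · exact ⟨joinConf 1 fun _ _ => 0, by rw [(reaches_joinConf_one _).escCount_one, h]⟩
  · exact ⟨fun _ => 2, by rw [escCount_const_two_one, h]⟩

theorem exists_escCount_eq (n : ℕ) {A : ℕ → ℕ} (hA : IsCount A)
    (hbound : ∀ k, WindowBound (2 ^ (k + 1) - 1) (2 ^ k) A) :
    ∃ C, ∀ j ≤ n + 1, escCount C j = A j := by
  induction n generalizing A with
  | zero =>
    obtain ⟨C, hC⟩ := exists_escCount_one_eq hA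
    refine ⟨C, fun j hj => ?_⟩
    obtain rfl | rfl := Nat.le_one_iff_eq_zero_or_eq_one.1 hj
    exacts [(escCount_zero C).trans hA.zero.symm, hC]
  | succ n ih =>
    obtain ⟨S, hS⟩ := exists_encodes hA (by norm_num) (hbound 1)
    have hSbound : ∀ k, WindowBound (2 ^ (k + 1) - 1) (2 * 2 ^ k) S := fun k => by
      rw [← pow_succ', ← hS.windowBound_iff, ← two_pow_add_two_sub_one]
      exact hbound (k + 1)
    -- If the first letter is `0`, the first block is empty: the root's rotor starts from `1`, which
    -- emits it without a chip for the sub-branches, so `n + 1` chips for each of them suffice.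
    obtain ⟨q, d, hq, hSd, hlen⟩ : ∃ q d, (∀ x, delay q x = d) ∧ S d = 0 ∧
        n + 2 ≤ n + 1 + d + S (n + 1 + d) := by
      by_cases hS1 : S 1 = 0
      · exact ⟨1, 1, delay_one, hS1, by omega⟩
      · have hle : S 1 ≤ S (n + 1) := hS.monotone_sum (by omega)
        exact ⟨2, 0, delay_two, hS.sum_zero, by rw [add_zero]; omega⟩
    choose f hf using fun x => ih
      (isCount_deal (S := fun i => S (i + d)) (by simpa using hSd)
        (fun i j hij => hS.monotone_sum (by omega)) ((hSbound 0).shift_left d) x)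
      (fun k => windowBound_deal ((hSbound k).shift_left d) x)
    have hsum : ∀ i ≤ n + 1 + d, S i = ∑ x, escCount (f x) (i - delay q x) := fun i hi => by
      have htruncate : S (i - d + d) = S i := by
        rcases le_total d i with hdi | hid
        · rw [Nat.sub_add_cancel hdi]
        · have := hS.monotone_sum hid
          rw [Nat.sub_eq_zero_of_le hid, zero_add]
          omega
      simp only [hq, hf _ (i - d) (by omega), sum_deal, htruncate]
    exact ⟨joinConf q f, fun j hj =>
      (hS.eq_of_forall_eq (encodes_joinConf q f) hsum (hj.trans hlen)).symm⟩

/-! ### Finite words -/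

/-- The number of ones among the first `n` letters of a word, which counts as continued by
zeros. -/
def prefixCount (a : List Bool) (n : ℕ) : ℕ := Nat.count (fun j => a[j]? = some true) n

theorem count_true_take (a : List Bool) (n : ℕ) : (a.take n).count true = prefixCount a n := by
  induction n with
  | zero => simp [prefixCount]
  | succ n ih =>
    rw [prefixCount, Nat.count_succ, ← prefixCount, ← ih, List.take_add_one, List.count_append]
    rcases a[n]? with _ | _ | _ <;> simp

theorem prefixCount_add (a : List Bool) (m n : ℕ) :
    prefixCount a (m + n) = prefixCount a m + ((a.drop m).take n).count true := by
  rw [count_true_take]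
  simp only [prefixCount, Nat.count_add, List.getElem?_drop]

theorem prefixCount_succ_of_length_le {a : List Bool} {n : ℕ} (h : a.length ≤ n) :
    prefixCount a (n + 1) = prefixCount a n := by
  simp [prefixCount, Nat.count_succ, h]

theorem condP_succ_iff (a : List Bool) (k : ℕ) : CondP a (k + 1) ↔
    ∀ i, i + (2 ^ (k + 1) - 1) ≤ a.length →
      prefixCount a (i + (2 ^ (k + 1) - 1)) ≤ prefixCount a i + 2 ^ k := by
  simp [CondP, prefixCount_add]

/-- A window that sticks out of the word is no worse than a window of even length `2^(k+2) - 2`,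
and the halves of the latter are bounded by `(P_(k+1))`. -/
theorem windowBound_prefixCount {a : List Bool} (h : ∀ k, CondP a (k + 1)) (k : ℕ) :
    WindowBound (2 ^ (k + 1) - 1) (2 ^ k) (prefixCount a) := by
  induction k with
  | zero => exact (isCount_count _).windowBound_self 1
  | succ k ih =>
    intro i
    by_cases hi : i + (2 ^ (k + 1 + 1) - 1) ≤ a.length
    · exact (condP_succ_iff a (k + 1)).1 (h (k + 1)) i hi
    · have hhalves := ih.trans ih i
      have hlength : i + (2 ^ (k + 1 + 1) - 1) =
          i + (2 ^ (k + 1) - 1 + (2 ^ (k + 1) - 1)) + 1 := by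
        rw [two_pow_add_two_sub_one]
        have := Nat.one_le_two_pow (n := k + 1)
        omega
      rw [hlength, prefixCount_succ_of_length_le (by omega)]
      exact hhalves.trans_eq (by ring)

theorem count_eq_count_iff {p q : ℕ → Prop} [DecidablePred p] [DecidablePred q] {N : ℕ} :
    (∀ n ≤ N, Nat.count p n = Nat.count q n) ↔ ∀ j < N, (p j ↔ q j) := by
  constructor
  · intro h j hj
    have hsucc := h (j + 1) hj
    rw [Nat.count_succ, Nat.count_succ, h j hj.le] at hsucc
    by_cases hp : p j <;> by_cases hq : q j <;> simp_all
  · intro h n hn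
    induction n with
    | zero => simp
    | succ n ih => simp only [Nat.count_succ, ih (by omega), h n (by omega)]

theorem forall_get_iff_escCount_eq (a : List Bool) (C : YConf) :
    (∀ j : Fin a.length, (a.get j = true ↔ yescapes C j.val)) ↔
      ∀ n ≤ a.length, escCount C n = prefixCount a n := by
  classical
  simp only [escCount, prefixCount]
  rw [count_eq_count_iff, Fin.forall_iff]
  refine forall₂_congr fun j hj => ?_
  rw [List.get_eq_getElem, List.getElem?_eq_getElem hj, Option.some_inj]
  exact Iff.comm

/-- Lemma 4.6: a binary word `a = a₁…aₙ` is the escape sequence of the first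
`n` chips for some initial rotor configuration on the branch `Y` (the `j`-th
letter is `true` iff the `j`-th chip escapes to infinity) if and only if `a`
satisfies condition `(P_k)` for every `k ≥ 1`: every subword of `a` of length
`2ᵏ − 1` contains at most `2^(k−1)` ones. -/
theorem stmt16 (a : List Bool) :
    (∃ C0 : YConf, ∀ j : Fin a.length, (a.get j = true ↔ yescapes C0 j.val))
      ↔ ∀ k : ℕ, 1 ≤ k → CondP a k := by
  have hshift : (∀ k, 1 ≤ k → CondP a k) ↔ ∀ k, CondP a (k + 1) :=
    ⟨fun h k => h (k + 1) k.succ_pos, fun h k hk => Nat.sub_add_cancel hk ▸ h (k - 1)⟩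
  simp only [hshift, forall_get_iff_escCount_eq]
  constructor
  · rintro ⟨C, hC⟩ k
    refine (condP_succ_iff a k).2 fun i hi => ?_
    rw [← hC _ hi, ← hC i (by omega)]
    exact windowBound_escCount k C i
  · intro h
    obtain ⟨C, hC⟩ := exists_escCount_eq a.length (isCount_count _) (windowBound_prefixCount h)
    exact ⟨C, fun n hn => hC n (by omega)⟩
end
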